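/- In any complemented HMS model, for every individual i ∈ I and every event E, the set L_i(E) is an S(E)-based event, i.e., L_i(E) = D^↑ for some D ⊆ S(E). -/

import Mathlib

/-!
A set is an event based in `S Φ` exactly when its members all lie in spaces above `S Φ` and
membership can be tested after projecting to `S Φ`. An implicit possibility set `Λ(ω)` stays in the
space of `ω` and projects to `Λ(ω_Φ)`, so testing all of `Λ(ω)` against `E` amounts to testing
`Λ(ω_Φ)`; nonemptiness of `Λ(ω)` puts `ω` itself above `S Φ`.
-/

/-- The frame underlying HMS (Heifetz–Meier–Schipper) unawareness models: a complete
lattice of nonempty pairwise disjoint state spaces `S Φ` indexed by the subsets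
`Φ ⊆ At` of atomic formulas (ordered by inclusion of the index), together with
commuting surjective projections `r Φ Ψ : S Φ → S Ψ` for `Ψ ⊆ Φ`. -/
structure HMSFrame (At : Type*) (Ω : Type*) where
  S : Set At → Set Ω
  S_nonempty : ∀ Φ : Set At, (S Φ).Nonempty
  S_disjoint : ∀ ⦃Φ Φ' : Set At⦄, Φ ≠ Φ' → Disjoint (S Φ) (S Φ')
  S_cover : ∀ ω : Ω, ∃ Φ : Set At, ω ∈ S Φ
  r : Set At → Set At → Ω → Ω
  r_mem : ∀ ⦃Φ Ψ : Set At⦄, Ψ ⊆ Φ → ∀ ⦃ω : Ω⦄, ω ∈ S Φ → r Φ Ψ ω ∈ S Ψ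
  r_surjOn : ∀ ⦃Φ Ψ : Set At⦄, Ψ ⊆ Φ → Set.SurjOn (r Φ Ψ) (S Φ) (S Ψ)
  r_id : ∀ (Φ : Set At), ∀ ω ∈ S Φ, r Φ Φ ω = ω
  r_comp : ∀ ⦃Φ Ψ Υ : Set At⦄, Υ ⊆ Ψ → Ψ ⊆ Φ → ∀ ω ∈ S Φ, r Ψ Υ (r Φ Ψ ω) = r Φ Υ ω

variable {At Ω : Type*}

/-- `D^↑`, for a subset `D` of the space `S Φ`: all extensions of states in `D` to
(weakly) more expressive spaces. -/
def HMSFrame.up (F : HMSFrame At Ω) (Φ : Set At) (D : Set Ω) : Set Ω :=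
  {ω : Ω | ∃ Ψ : Set At, Φ ⊆ Ψ ∧ ω ∈ F.S Ψ ∧ F.r Ψ Φ ω ∈ D}

/-- `E` is an event with base-space `S Φ` (and base some `D ⊆ S Φ`). -/
def HMSFrame.IsEvent (F : HMSFrame At Ω) (Φ : Set At) (E : Set Ω) : Prop :=
  ∃ D, D ⊆ F.S Φ ∧ E = F.up Φ D

/-- Negation `¬E := (S Φ \ D)^↑` of an event `E` with base-space `S Φ`
(note `S Φ \ E = S Φ \ D` for an event `E` with base `D ⊆ S Φ`). -/
def HMSFrame.neg (F : HMSFrame At Ω) (Φ : Set At) (E : Set Ω) : Set Ω :=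
  F.up Φ (F.S Φ \ E)

/-- Properties of the (explicit) possibility correspondence of HMS models:
nonemptiness, Confinement, Generalized Reflexivity, Stationarity,
Projections Preserve Ignorance, and Projections Preserve Knowledge. -/
structure IsPossibility (F : HMSFrame At Ω) (Pi : Ω → Set Ω) : Prop where
  nonempty : ∀ ω : Ω, (Pi ω).Nonempty
  confinement : ∀ ⦃Φ : Set At⦄ ⦃ω : Ω⦄, ω ∈ F.S Φ → ∃ Ψ, Ψ ⊆ Φ ∧ Pi ω ⊆ F.S Ψ
  genRefl : ∀ ⦃Υ : Set At⦄ ⦃ω : Ω⦄, Pi ω ⊆ F.S Υ → ω ∈ F.up Υ (Pi ω)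
  stationarity : ∀ ⦃ω ω' : Ω⦄, ω' ∈ Pi ω → Pi ω' = Pi ω
  projIgnorance : ∀ ⦃Φ Ψ : Set At⦄ ⦃ω : Ω⦄, ω ∈ F.S Φ → Ψ ⊆ Φ →
    ∀ ⦃Υ Υ' : Set At⦄, Pi ω ⊆ F.S Υ → Pi (F.r Φ Ψ ω) ⊆ F.S Υ' →
      F.up Υ (Pi ω) ⊆ F.up Υ' (Pi (F.r Φ Ψ ω))
  projKnowledge : ∀ ⦃Φ Ψ Υ : Set At⦄ ⦃ω : Ω⦄, Υ ⊆ Ψ → Ψ ⊆ Φ → ω ∈ F.S Φ →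
    Pi ω ⊆ F.S Ψ → F.r Ψ Υ '' Pi ω = Pi (F.r Φ Υ ω)

/-- Properties of an implicit possibility correspondence `La` relative to the
explicit possibility correspondence `Pi`: Reflexivity, Stationarity, Projections
Preserve Implicit Knowledge (whose statement `(Λ(ω))_Ψ = Λ(ω_Ψ)` presupposes that
the projection of `Λ(ω)` is defined, i.e. `Λ(ω) ⊆ S Φ` for `ω ∈ S Φ`),
Explicit Measurability, and Implicit Measurability. -/
structure IsImplicit (F : HMSFrame At Ω) (Pi La : Ω → Set Ω) : Prop where
  refl : ∀ ω : Ω, ω ∈ La ω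
  stationarity : ∀ ⦃ω ω' : Ω⦄, ω' ∈ La ω → La ω' = La ω
  projImplicit : ∀ ⦃Φ : Set At⦄ ⦃ω : Ω⦄, ω ∈ F.S Φ →
    La ω ⊆ F.S Φ ∧ ∀ ⦃Ψ : Set At⦄, Ψ ⊆ Φ → F.r Φ Ψ '' La ω = La (F.r Φ Ψ ω)
  explicitMeas : ∀ ⦃ω ω' : Ω⦄, ω' ∈ La ω → Pi ω' = Pi ω
  implicitMeas : ∀ ⦃Φ Ψ : Set At⦄ ⦃ω ω' : Ω⦄, ω ∈ F.S Φ → Pi ω ⊆ F.S Ψ →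
    ω' ∈ Pi ω → La ω' = F.r Φ Ψ '' La ω

/-- Properties of the primitive implicit possibility correspondence `La` of an
implicit knowledge-based HMS model: nonemptiness, Reflexivity, Stationarity, and
Projections Preserve Implicit Knowledge. -/
structure IsImplicitStar (F : HMSFrame At Ω) (La : Ω → Set Ω) : Prop where
  nonempty : ∀ ω : Ω, (La ω).Nonempty
  refl : ∀ ω : Ω, ω ∈ La ω
  stationarity : ∀ ⦃ω ω' : Ω⦄, ω' ∈ La ω → La ω' = La ω
  projImplicit : ∀ ⦃Φ : Set At⦄ ⦃ω : Ω⦄, ω ∈ F.S Φ →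
    La ω ⊆ F.S Φ ∧ ∀ ⦃Ψ : Set At⦄, Ψ ⊆ Φ → F.r Φ Ψ '' La ω = La (F.r Φ Ψ ω)

/-- Property (O) (Lack of Conception): the awareness level at `ω ∈ S Φ` (encoded
by its index `al ω ⊆ At`, so that the awareness level is the space `S (al ω)`)
is weakly less expressive than `S Φ`. -/
def PropO (F : HMSFrame At Ω) (al : Ω → Set At) : Prop :=
  ∀ ⦃Φ : Set At⦄ ⦃ω : Ω⦄, ω ∈ F.S Φ → al ω ⊆ Φ

/-- Property (I) (Awareness Measurability). -/
def PropI (F : HMSFrame At Ω) (La : Ω → Set Ω) (al : Ω → Set At) : Prop :=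
  ∀ ⦃ω ω' : Ω⦄, ω' ∈ La ω → al ω' = al ω

/-- Property (II): if `ω ∈ S Φ` and `S Ψ ⪯ α(ω)` then `α(ω_Ψ) = S Ψ`. -/
def PropII (F : HMSFrame At Ω) (al : Ω → Set At) : Prop :=
  ∀ ⦃Φ Ψ : Set At⦄ ⦃ω : Ω⦄, ω ∈ F.S Φ → Ψ ⊆ al ω → Ψ ⊆ Φ → al (F.r Φ Ψ ω) = Ψ

/-- Property (III): if `ω ∈ S Φ` and `α(ω) ⪯ S Ψ ⪯ S Φ` then `α(ω_Ψ) = α(ω)`. -/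
def PropIII (F : HMSFrame At Ω) (al : Ω → Set At) : Prop :=
  ∀ ⦃Φ Ψ : Set At⦄ ⦃ω : Ω⦄, ω ∈ F.S Φ → al ω ⊆ Ψ → Ψ ⊆ Φ → al (F.r Φ Ψ ω) = al ω

/-- Property (IV): if `ω ∈ S Φ` and `Ψ ⊆ Φ` then `α(ω) ⪰ α(ω_Ψ)`. -/
def PropIV (F : HMSFrame At Ω) (al : Ω → Set At) : Prop :=
  ∀ ⦃Φ Ψ : Set At⦄ ⦃ω : Ω⦄, ω ∈ F.S Φ → Ψ ⊆ Φ → al (F.r Φ Ψ ω) ⊆ al ω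

/-- `PiS` is the explicit possibility correspondence derived from the implicit
possibility correspondence `La` and the awareness function `al`:
`Π*(ω_Ψ) := (Λ*(ω))_{α(ω_Ψ)}` for all `ω ∈ S Φ` and `Ψ ⊆ Φ`. -/
def DerivedPi (F : HMSFrame At Ω) (La : Ω → Set Ω) (al : Ω → Set At)
    (PiS : Ω → Set Ω) : Prop :=
  ∀ ⦃Φ Ψ : Set At⦄ ⦃ω : Ω⦄, ω ∈ F.S Φ → Ψ ⊆ Φ →
    PiS (F.r Φ Ψ ω) = F.r Φ (al (F.r Φ Ψ ω)) '' La ω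

/-- The (explicit) knowledge operator `K(E) := {ω : Π(ω) ⊆ E}` (as a set this
agrees with the definition with default value `∅^{S(E)}` on the vacuous case). -/
def Kop (F : HMSFrame At Ω) (Pi : Ω → Set Ω) (E : Set Ω) : Set Ω :=
  {ω : Ω | Pi ω ⊆ E}

/-- The implicit knowledge operator `L(E) := {ω : Λ(ω) ⊆ E}`. -/
def Lop (F : HMSFrame At Ω) (La : Ω → Set Ω) (E : Set Ω) : Set Ω :=
  {ω : Ω | La ω ⊆ E}

/-- The awareness operator `A(E) := {ω : S_{Π(ω)} ⪰ S(E)}`, applied to an event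
with base-space `S Φ`. -/
def Aop (F : HMSFrame At Ω) (Pi : Ω → Set Ω) (Φ : Set At) : Set Ω :=
  {ω : Ω | ∃ Ψ : Set At, Φ ⊆ Ψ ∧ Pi ω ⊆ F.S Ψ}

/-- The unawareness operator `U(E) := ¬A(E)`, applied to an event with
base-space `S Φ` (recall `A(E)` is an `S(E)`-based event). -/
def Uop (F : HMSFrame At Ω) (Pi : Ω → Set Ω) (Φ : Set At) : Set Ω :=
  F.neg Φ (Aop F Pi Φ)

/-- The awareness operator `A*(E) := {ω : α(ω) ⪰ S(E)}` defined from the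
awareness function, applied to an event with base-space `S Φ`. -/
def AopStar (al : Ω → Set At) (Φ : Set At) : Set Ω :=
  {ω : Ω | Φ ⊆ al ω}

/-- An HMS model: the frame together with a possibility correspondence for each
individual and a valuation mapping each atomic formula to an event. -/
structure HMSModel (At Ω I : Type*) extends HMSFrame At Ω where
  Pi : I → Ω → Set Ω
  Pi_poss : ∀ i : I, IsPossibility toHMSFrame (Pi i)
  val : At → Set Ω
  val_event : ∀ p : At, ∃ Φ : Set At, toHMSFrame.IsEvent Φ (val p)

/-- A complemented HMS model: an HMS model together with an implicit possibility
correspondence for each individual. -/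
structure CompHMSModel (At Ω I : Type*) extends HMSModel At Ω I where
  La : I → Ω → Set Ω
  La_impl : ∀ i : I, IsImplicit toHMSModel.toHMSFrame (Pi i) (La i)

/-- An implicit knowledge-based HMS model: the frame together with, for each
individual, a primitive implicit possibility correspondence and an awareness
function satisfying (O)-(IV), and a valuation mapping atoms to events. -/
structure ImpHMSModel (At Ω I : Type*) extends HMSFrame At Ω where
  LaS : I → Ω → Set Ω
  LaS_impl : ∀ i : I, IsImplicitStar toHMSFrame (LaS i)
  al : I → Ω → Set At
  al_O : ∀ i : I, PropO toHMSFrame (al i)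
  al_I : ∀ i : I, PropI toHMSFrame (LaS i) (al i)
  al_II : ∀ i : I, PropII toHMSFrame (al i)
  al_III : ∀ i : I, PropIII toHMSFrame (al i)
  al_IV : ∀ i : I, PropIV toHMSFrame (al i)
  val : At → Set Ω
  val_event : ∀ p : At, ∃ Φ : Set At, toHMSFrame.IsEvent Φ (val p)

section

variable {F : HMSFrame At Ω} {Φ Ψ : Set At} {E : Set Ω} {ω : Ω}

namespace HMSFrame

lemma index_unique (hΦ : ω ∈ F.S Φ) (hΨ : ω ∈ F.S Ψ) : Φ = Ψ :=
  by_contra fun hne => Set.disjoint_left.mp (F.S_disjoint hne) hΦ hΨ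

lemma mem_up_iff {D : Set Ω} (hω : ω ∈ F.S Ψ) : ω ∈ F.up Φ D ↔ Φ ⊆ Ψ ∧ F.r Ψ Φ ω ∈ D := by
  constructor
  · rintro ⟨Υ, hΦΥ, hωΥ, hD⟩
    obtain rfl := index_unique hωΥ hω
    exact ⟨hΦΥ, hD⟩
  · rintro ⟨hΦΨ, hD⟩
    exact ⟨Ψ, hΦΨ, hω, hD⟩

lemma IsEvent.mem_iff (hE : F.IsEvent Φ E) (hω : ω ∈ F.S Ψ) :
    ω ∈ E ↔ Φ ⊆ Ψ ∧ F.r Ψ Φ ω ∈ E := by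
  obtain ⟨D, -, rfl⟩ := hE
  rw [mem_up_iff hω]
  refine and_congr_right fun hΦΨ => ?_
  have hr : F.r Ψ Φ ω ∈ F.S Φ := F.r_mem hΦΨ hω
  rw [mem_up_iff hr, F.r_id Φ _ hr, and_iff_right subset_rfl]

lemma isEvent_of_mem_iff
    (h : ∀ ⦃Ψ : Set At⦄ ⦃ω : Ω⦄, ω ∈ F.S Ψ → (ω ∈ E ↔ Φ ⊆ Ψ ∧ F.r Ψ Φ ω ∈ E)) :
    F.IsEvent Φ E := by
  refine ⟨F.S Φ ∩ E, Set.inter_subset_left, ?_⟩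
  ext ω
  obtain ⟨Ψ, hω⟩ := F.S_cover ω
  rw [mem_up_iff hω, h hω]
  exact and_congr_right fun hΦΨ => (and_iff_right (F.r_mem hΦΨ hω)).symm

end HMSFrame

theorem implicit_knowledge_is_based_event_general {La : Ω → Set Ω}
    (hne : ∀ ω, (La ω).Nonempty)
    (hproj : ∀ ⦃Φ : Set At⦄ ⦃ω : Ω⦄, ω ∈ F.S Φ →
      La ω ⊆ F.S Φ ∧ ∀ ⦃Ψ : Set At⦄, Ψ ⊆ Φ → F.r Φ Ψ '' La ω = La (F.r Φ Ψ ω))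
    (hE : F.IsEvent Φ E) : F.IsEvent Φ (Lop F La E) := by
  refine HMSFrame.isEvent_of_mem_iff fun Ψ ω hω => ?_
  obtain ⟨hLaΨ, hLaproj⟩ := hproj hω
  calc
    La ω ⊆ E ↔ ∀ υ ∈ La ω, Φ ⊆ Ψ ∧ F.r Ψ Φ υ ∈ E :=
      forall₂_congr fun _ hυ => hE.mem_iff (hLaΨ hυ)
    _ ↔ Φ ⊆ Ψ ∧ F.r Ψ Φ '' La ω ⊆ E := by
      rw [forall₂_and, (hne ω).forall_const, Set.image_subset_iff]
      rfl
    _ ↔ Φ ⊆ Ψ ∧ La (F.r Ψ Φ ω) ⊆ E :=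
      and_congr_right fun hΦΨ => by rw [hLaproj hΦΨ]

end

/-- In any complemented HMS model, for every individual `i ∈ I` and
every event `E`, the set `L_i(E)` is an `S(E)`-based event, i.e. `L_i(E) = D^↑`
for some `D ⊆ S(E)`. -/
theorem implicit_knowledge_is_based_event
    {At Ω I : Type*} [Nonempty At] [Nonempty I]
    (M : CompHMSModel At Ω I) (i : I) (Φ : Set At) (E : Set Ω)
    (hE : M.toHMSFrame.IsEvent Φ E) :
    M.toHMSFrame.IsEvent Φ (Lop M.toHMSFrame (M.La i) E) :=
  implicit_knowledge_is_based_event_general (fun ω => ⟨ω, (M.La_impl i).refl ω⟩)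
    (M.La_impl i).projImplicit hE
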